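/- Let (F,W,A,r) be a capacity-balanced many-to-one assignment market with a dominant diagonal optimal matching μ. Then: (1) the payoff vector (x^f;y^f) with x^f_i=Σ_{j∈μ(i)} a_{ij} for all i∈F and y^f_j=0 for all j∈W is a core allocation of v_γ; and (2) the payoff vector (x^w;y^w) with x^w_i=0 for all i∈F and y^w_j=a_{j^μ j} for all j∈W is a core allocation of v_γ. -/

import Mathlib

open Finset
open scoped Classical

noncomputable section

variable {F W : Type*} [Fintype F] [Fintype W]

/-- `μ` is a matching between the firm coalition `S` and the worker coalition `T`:
each firm `i ∈ S` appears in at most `r i` pairs and each worker in `T` in at most one pair. -/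
def IsMatching (r : F → ℕ) (S : Finset F) (T : Finset W) (μ : Finset (F × W)) : Prop :=
  (∀ p ∈ μ, p.1 ∈ S ∧ p.2 ∈ T) ∧
  (∀ i : F, (μ.filter fun p => p.1 = i).card ≤ r i) ∧
  (∀ j : W, (μ.filter fun p => p.2 = j).card ≤ 1)

/-- total value of a matching -/
def matchValue (A : F → W → ℝ) (μ : Finset (F × W)) : ℝ := ∑ p ∈ μ, A p.1 p.2

lemma empty_isMatching (r : F → ℕ) (S : Finset F) (T : Finset W) :
    IsMatching r S T (∅ : Finset (F × W)) := by
  refine ⟨by simp, ?_, ?_⟩ <;> intro _ <;> simp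

/-- worth of the coalition formed by firms `S` and workers `T`. -/
def vGamma (A : F → W → ℝ) (r : F → ℕ) (S : Finset F) (T : Finset W) : ℝ :=
  ((S ×ˢ T).powerset.filter fun μ => IsMatching r S T μ).sup'
    ⟨∅, Finset.mem_filter.mpr ⟨Finset.mem_powerset.mpr (Finset.empty_subset _),
        empty_isMatching r S T⟩⟩ (matchValue A)

/-- firms belonging to a coalition of `F ⊕ W` -/
def firmPart (C : Finset (F ⊕ W)) : Finset F := univ.filter (fun i => Sum.inl i ∈ C)

/-- workers belonging to a coalition of `F ⊕ W` -/
def workerPart (C : Finset (F ⊕ W)) : Finset W := univ.filter (fun j => Sum.inr j ∈ C)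

/-- the coalitional function of the many-to-one assignment game -/
def gameValue (A : F → W → ℝ) (r : F → ℕ) (C : Finset (F ⊕ W)) : ℝ :=
  vGamma A r (firmPart C) (workerPart C)

/-- core membership -/
def inCore {N : Type*} [Fintype N] (v : Finset N → ℝ) (z : N → ℝ) : Prop :=
  (∑ k, z k) = v univ ∧ ∀ C : Finset N, v C ≤ ∑ k ∈ C, z k

/-- optimal matching of the grand coalition -/
def IsOptimalMatching (A : F → W → ℝ) (r : F → ℕ) (μ : Finset (F × W)) : Prop :=
  IsMatching r univ univ μ ∧
  ∀ μ' : Finset (F × W), IsMatching r univ univ μ' → matchValue A μ' ≤ matchValue A μ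

/-- workers assigned to firm `i` under the assignment function `m` -/
def assignedTo (m : W → F) (i : F) : Finset W := univ.filter fun j => m j = i

/-- the matching associated with an assignment function (every worker matched) -/
def matchingOfFn (m : W → F) : Finset (F × W) := univ.image fun j => (m j, j)

/-- `m : W → F` represents an optimal matching of a capacity-balanced market that assigns
exactly `r i` workers to each firm `i` and leaves no worker unmatched. -/
def IsBalancedOptimal (A : F → W → ℝ) (r : F → ℕ) (m : W → F) : Prop :=
  (∀ i : F, (assignedTo m i).card = r i) ∧
  IsOptimalMatching A r (matchingOfFn m)

/-- the projection of the core to the workers' payoffs -/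
def CW (A : F → W → ℝ) (m : W → F) : Set (W → ℝ) :=
  { y | (∀ j : W, 0 ≤ y j ∧ y j ≤ A (m j) j) ∧
        ∀ j k : W, m j ≠ m k → A (m j) k - A (m j) j ≤ y k - y j }

/-- excess of a coalition at a payoff vector -/
def excess {N : Type*} (v : Finset N → ℝ) (z : N → ℝ) (S : Finset N) : ℝ :=
  v S - ∑ k ∈ S, z k

/-- maximum surplus `s_ij(z)` of `i` against `j` at `z` -/
def maxSurplus {N : Type*} (v : Finset N → ℝ) (z : N → ℝ) (i j : N) : ℝ :=
  sSup { e | ∃ S : Finset N, i ∈ S ∧ j ∉ S ∧ e = excess v z S }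

def isImputation {N : Type*} [Fintype N] (v : Finset N → ℝ) (z : N → ℝ) : Prop :=
  (∑ k, z k) = v univ ∧ ∀ k : N, v {k} ≤ z k

def inKernel {N : Type*} [Fintype N] (v : Finset N → ℝ) (z : N → ℝ) : Prop :=
  isImputation v z ∧ ∀ i j : N, i ≠ j → maxSurplus v z i j = maxSurplus v z j i

/-- A coalition is inessential if it admits a nontrivial partition into two coalitions
whose values weakly majorize its own value. -/
def Inessential {N : Type*} (v : Finset N → ℝ) (R : Finset N) : Prop :=
  ∃ S T : Finset N, S.Nonempty ∧ T.Nonempty ∧ Disjoint S T ∧ S ∪ T = R ∧ v R ≤ v S + v T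

def Essential {N : Type*} (v : Finset N → ℝ) (R : Finset N) : Prop :=
  R.Nonempty ∧ ¬ Inessential v R

/-- arcs of the tight digraph on `W ∪ {0}` (node `0` is `none`) -/
def tightArc (A : F → W → ℝ) (m : W → F) (y : W → ℝ) : Option W → Option W → Prop
  | none, none => False
  | none, some k => y k = 0
  | some j, none => y j = A (m j) j
  | some j, some k => m j ≠ m k ∧ y k - y j = A (m j) k - A (m j) j

/-! A payoff vector `(x; y)` with `y ≥ 0` is stable as soon as no firm `i` can profitably recruit a
set `T` of at most `r i` workers, i.e. `∑ j ∈ T, A i j ≤ x i + ∑ j ∈ T, y j`: summing this over the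
firms of a coalition, with `T` the workers a matching gives to each, bounds the value of that
matching. The first dominance condition is this inequality for `y = 0`, and the second yields it
for `x = 0`; there `y ≥ 0` because, by the first, a firm does not gain by dismissing a worker. -/

lemma nonneg_of_forall_sum_le_of_card_le {ι M : Type*} [AddCommGroup M] [PartialOrder M]
    [IsOrderedAddMonoid M] {s : Finset ι} {f : ι → M}
    (hs : ∀ t : Finset ι, t.card ≤ s.card → ∑ k ∈ t, f k ≤ ∑ k ∈ s, f k) {i : ι} (hi : i ∈ s) :
    0 ≤ f i := by
  have herase : ∑ k ∈ s.erase i, f k ≤ ∑ k ∈ s, f k := hs _ (card_le_card (erase_subset i s))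
  rwa [← add_sum_erase s f hi, le_add_iff_nonneg_left] at herase

lemma sum_sumElim_eq_sum_firmPart_add_sum_workerPart {M : Type*} [AddCommMonoid M]
    (C : Finset (F ⊕ W)) (x : F → M) (y : W → M) :
    ∑ k ∈ C, Sum.elim x y k = ∑ i ∈ firmPart C, x i + ∑ j ∈ workerPart C, y j := by
  have hfirm : firmPart C = C.toLeft := by ext; simp [firmPart]
  have hworker : workerPart C = C.toRight := by ext; simp [workerPart]
  rw [hfirm, hworker, sum_sum_eq_sum_toLeft_add_sum_toRight]
  simp only [Sum.elim_inl, Sum.elim_inr]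

section Matching

variable {F W : Type*} {A : F → W → ℝ} {r : F → ℕ} {S : Finset F} {T : Finset W}
  {μ : Finset (F × W)}

/-- The set `μ(i)` of workers matched to firm `i` by `μ`. -/
def partners (μ : Finset (F × W)) (i : F) : Finset W := (μ.filter fun p => p.1 = i).image Prod.snd

lemma mem_partners {i : F} {j : W} : j ∈ partners μ i ↔ (i, j) ∈ μ := by
  simp [partners]

namespace IsMatching

lemma card_partners_le (hμ : IsMatching r S T μ) (i : F) : (partners μ i).card ≤ r i :=
  card_image_le.trans (hμ.2.1 i)

lemma sum_eq_sum_partners {M : Type*} [AddCommMonoid M] (hμ : IsMatching r S T μ)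
    (f : F → W → M) : ∑ p ∈ μ, f p.1 p.2 = ∑ i ∈ S, ∑ j ∈ partners μ i, f i j :=
  sum_finset_product' μ S (partners μ) fun p => by
    simpa only [mem_partners, iff_and_self] using fun hp => (hμ.1 p hp).1

lemma injOn_snd (hμ : IsMatching r S T μ) : Set.InjOn Prod.snd (μ : Set (F × W)) :=
  fun p hp q hq hpq => card_le_one.mp (hμ.2.2 q.2) p (mem_filter.mpr ⟨hp, hpq⟩) q
    (mem_filter.mpr ⟨hq, rfl⟩)

lemma sum_snd_le_sum {M : Type*} [AddCommMonoid M] [PartialOrder M] [IsOrderedAddMonoid M]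
    {y : W → M} (hμ : IsMatching r S T μ) (hy : ∀ j ∈ T, 0 ≤ y j) :
    ∑ p ∈ μ, y p.2 ≤ ∑ j ∈ T, y j := by
  have hsub : μ.image Prod.snd ⊆ T := image_subset_iff.mpr fun p hp => (hμ.1 p hp).2
  calc ∑ p ∈ μ, y p.2 = ∑ j ∈ μ.image Prod.snd, y j := (sum_image hμ.injOn_snd).symm
    _ ≤ ∑ j ∈ T, y j := sum_le_sum_of_subset_of_nonneg hsub fun j hj _ => hy j hj

lemma matchValue_le_sum_add_sum {x : F → ℝ} {y : W → ℝ} (hμ : IsMatching r S T μ)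
    (hy : ∀ j, 0 ≤ y j)
    (hxy : ∀ (i : F) (U : Finset W), U.card ≤ r i → ∑ j ∈ U, A i j ≤ x i + ∑ j ∈ U, y j) :
    matchValue A μ ≤ ∑ i ∈ S, x i + ∑ j ∈ T, y j := by
  calc matchValue A μ = ∑ i ∈ S, ∑ j ∈ partners μ i, A i j := hμ.sum_eq_sum_partners A
    _ ≤ ∑ i ∈ S, (x i + ∑ j ∈ partners μ i, y j) :=
        sum_le_sum fun i _ => hxy i _ (hμ.card_partners_le i)
    _ = ∑ i ∈ S, x i + ∑ p ∈ μ, y p.2 := by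
        rw [sum_add_distrib, hμ.sum_eq_sum_partners fun _ j => y j]
    _ ≤ ∑ i ∈ S, x i + ∑ j ∈ T, y j := by gcongr; exact hμ.sum_snd_le_sum fun j _ => hy j

end IsMatching

end Matching

section Worth

variable {A : F → W → ℝ} {r : F → ℕ} {S : Finset F} {T : Finset W}

lemma IsMatching.matchValue_le_vGamma {μ : Finset (F × W)} (hμ : IsMatching r S T μ) :
    matchValue A μ ≤ vGamma A r S T :=
  le_sup' (matchValue A) <| mem_filter.mpr
    ⟨mem_powerset.mpr fun p hp => mem_product.mpr (hμ.1 p hp), hμ⟩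

lemma vGamma_le_sum_add_sum {x : F → ℝ} {y : W → ℝ} (hy : ∀ j, 0 ≤ y j)
    (hxy : ∀ (i : F) (U : Finset W), U.card ≤ r i → ∑ j ∈ U, A i j ≤ x i + ∑ j ∈ U, y j) :
    vGamma A r S T ≤ ∑ i ∈ S, x i + ∑ j ∈ T, y j :=
  sup'_le _ _ fun _ hμ => (mem_filter.mp hμ).2.matchValue_le_sum_add_sum hy hxy

end Worth

section Assignment

variable {A : F → W → ℝ} {r : F → ℕ} {m : W → F}

omit [Fintype F] in
lemma isMatching_matchingOfFn (hcap : ∀ i, (assignedTo m i).card ≤ r i) {S : Finset F}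
    (hS : ∀ j, m j ∈ S) : IsMatching r S univ (matchingOfFn m) := by
  refine ⟨?_, fun i => ?_, fun j => ?_⟩
  · simp [matchingOfFn, hS]
  · rw [matchingOfFn, filter_image]
    exact card_image_le.trans (hcap i)
  · rw [matchingOfFn, filter_image, filter_eq' univ j]
    exact card_image_le.trans (by simp)

omit [Fintype F] in
lemma matchValue_matchingOfFn (A : F → W → ℝ) (m : W → F) :
    matchValue A (matchingOfFn m) = ∑ j, A (m j) j :=
  sum_image fun _ _ _ _ h => congrArg Prod.snd h

lemma sum_sum_assignedTo {M : Type*} [AddCommMonoid M] (f : F → W → M) (m : W → F) :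
    ∑ i, ∑ j ∈ assignedTo m i, f i j = ∑ j, f (m j) j := by
  rw [sum_comm' (s' := fun j => {m j}) (t' := univ) (by simp [assignedTo, eq_comm])]
  simp only [sum_singleton]

theorem inCore_gameValue_sumElim {x : F → ℝ} {y : W → ℝ}
    (hcap : ∀ i, (assignedTo m i).card ≤ r i) (hsum : ∑ i, x i + ∑ j, y j = ∑ j, A (m j) j)
    (hy : ∀ j, 0 ≤ y j)
    (hxy : ∀ (i : F) (U : Finset W), U.card ≤ r i → ∑ j ∈ U, A i j ≤ x i + ∑ j ∈ U, y j) :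
    inCore (gameValue A r) (Sum.elim x y) := by
  have hstable (C : Finset (F ⊕ W)) : gameValue A r C ≤ ∑ k ∈ C, Sum.elim x y k := by
    rw [sum_sumElim_eq_sum_firmPart_add_sum_workerPart]
    exact vGamma_le_sum_add_sum hy hxy
  have hfeasible : ∑ k, Sum.elim x y k ≤ gameValue A r univ := by
    have hμ : IsMatching r (firmPart (univ : Finset (F ⊕ W)))
        (workerPart (univ : Finset (F ⊕ W))) (matchingOfFn m) := by
      simpa [firmPart, workerPart] using
        isMatching_matchingOfFn (S := univ) hcap fun j => mem_univ (m j)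
    calc ∑ k, Sum.elim x y k = matchValue A (matchingOfFn m) := by
          simpa [matchValue_matchingOfFn] using hsum
      _ ≤ gameValue A r univ := hμ.matchValue_le_vGamma
  exact ⟨hfeasible.antisymm (hstable univ), hstable⟩

theorem inCore_gameValue_firmOptimal (hcap : ∀ i, (assignedTo m i).card ≤ r i)
    (hfirm : ∀ (i : F) (T : Finset W), T.card ≤ r i →
        ∑ j ∈ T, A i j ≤ ∑ j ∈ assignedTo m i, A i j) :
    inCore (gameValue A r)
      (Sum.elim (fun i => ∑ j ∈ assignedTo m i, A i j) (fun _ => 0)) :=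
  inCore_gameValue_sumElim hcap (by rw [sum_sum_assignedTo, sum_const_zero, add_zero])
    (fun _ => le_rfl) (by simpa only [sum_const_zero, add_zero] using hfirm)

theorem inCore_gameValue_workerOptimal (hcap : ∀ i, (assignedTo m i).card ≤ r i)
    (hnonneg : ∀ j, 0 ≤ A (m j) j) (hworker : ∀ (j : W) (i : F), A i j ≤ A (m j) j) :
    inCore (gameValue A r) (Sum.elim (fun _ => 0) (fun j => A (m j) j)) :=
  inCore_gameValue_sumElim hcap (by rw [sum_const_zero, zero_add]) hnonneg fun i T _ => by
    simpa only [zero_add] using sum_le_sum fun j (_ : j ∈ T) => hworker j i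

end Assignment

theorem dominantDiagonal_side_optimal_core_general (A : F → W → ℝ) (r : F → ℕ)
    (m : W → F) (hcap : ∀ i, (assignedTo m i).card ≤ r i)
    (hdd1 : ∀ (i : F) (T : Finset W), T.card ≤ r i →
        ∑ j ∈ T, A i j ≤ ∑ j ∈ assignedTo m i, A i j)
    (hdd2 : ∀ (j : W) (i : F), A i j ≤ A (m j) j) :
    inCore (gameValue A r)
      (Sum.elim (fun i => ∑ j ∈ assignedTo m i, A i j) (fun _ => 0)) ∧
    inCore (gameValue A r)
      (Sum.elim (fun _ => 0) (fun j => A (m j) j)) := by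
  have hnonneg (j : W) : 0 ≤ A (m j) j :=
    nonneg_of_forall_sum_le_of_card_le (s := assignedTo m (m j))
      (fun T hT => hdd1 (m j) T (hT.trans (hcap (m j)))) (by simp [assignedTo])
  exact ⟨inCore_gameValue_firmOptimal hcap hdd1,
    inCore_gameValue_workerOptimal hcap hnonneg hdd2⟩

/-- in a dominant diagonal capacity-balanced market, both the
firm-optimal payoff vector (each firm gets the whole value of its assigned workers,
each worker gets 0) and the worker-optimal payoff vector (each firm gets 0, each worker
`j` gets `a_{j^μ j}`) are core allocations. -/
theorem dominantDiagonal_side_optimal_core (A : F → W → ℝ) (r : F → ℕ)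
    (hA : ∀ i j, 0 ≤ A i j) (hbal : ∑ i, r i = Fintype.card W)
    (m : W → F) (hm : IsBalancedOptimal A r m)
    (hdd1 : ∀ (i : F) (T : Finset W), T.card ≤ r i →
        ∑ j ∈ T, A i j ≤ ∑ j ∈ assignedTo m i, A i j)
    (hdd2 : ∀ (j : W) (i : F), A i j ≤ A (m j) j) :
    inCore (gameValue A r)
      (Sum.elim (fun i => ∑ j ∈ assignedTo m i, A i j) (fun _ => 0)) ∧
    inCore (gameValue A r)
      (Sum.elim (fun _ => 0) (fun j => A (m j) j)) :=
  dominantDiagonal_side_optimal_core_general A r m (fun i => (hm.1 i).le) hdd1 hdd2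

end
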